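/- Let p be a prime, l ≥ 1 an integer, and N = p^l. Let d ≥ 2 be an integer dividing N. If A is a d-cube-free subset of Z_N, then d·|A| ≤ (d−1)·N (i.e., |A| ≤ (d−1)N/d). -/

import Mathlib

/-- `A ⊆ ZMod N` is `d`-cube-free: there is no multiset (encoded as `a : Fin d → ZMod N`)
whose projective `d`-cube (all nonempty subset sums) is contained in `A`. -/
def IsCubeFree (N d : ℕ) (A : Finset (ZMod N)) : Prop :=
  ¬ ∃ a : Fin d → ZMod N, ∀ I : Finset (Fin d), I.Nonempty → (∑ i ∈ I, a i) ∈ A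

/-!
Suppose the complement `B` of `A` satisfies `d * |B| < N`. We find a cube in `A` generated by `y`
and `d - 1` copies of `x`, that is, `j x ∈ A` for `0 < j < d` and `y + j x ∈ A` for `j < d`.

Take `x = (1 + p t)⁻¹`. It is bad only if some `b ∈ B` has `b (1 + p t) ∈ {1, …, d - 1}`. No `t`
does this if `d ∣ b`. Otherwise `g = gcd (b p, N)` divides `d`; the map `t ↦ b + (b p) t` takes each
value at most `g` times, and its values lie in a single residue class modulo `g`, which has `d / g`
members below `d`. So each `b` spoils at most `d` of the `N` choices of `t`, and some `t` survives.
Given `x`, each `b ∈ B` spoils at most `d` choices of `y`, namely `b - j x`, so some `y` survives.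
-/

open Finset

lemma exists_forall_mem_not_of_card_filter_le {α β : Type*} [Fintype β] {B : Finset α}
    {P : α → β → Prop} [∀ b, DecidablePred (P b)] {d : ℕ}
    (hP : ∀ b ∈ B, #{t | P b t} ≤ d) (hB : d * #B < Fintype.card β) :
    ∃ t, ∀ b ∈ B, ¬ P b t := by
  classical
  have hcard : #(B.biUnion fun b => {t | P b t}) < #(univ : Finset β) :=
    (card_biUnion_le_card_mul _ _ d hP).trans_lt (by rwa [mul_comm, card_univ])
  obtain ⟨t, -, ht⟩ := exists_mem_notMem_of_card_lt_card hcard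
  exact ⟨t, fun b hb hbt => ht (mem_biUnion.2 ⟨b, hb, by simpa using hbt⟩)⟩

lemma exists_forall_lt_add_nsmul_notMem {G : Type*} [AddGroup G] [Fintype G] {d : ℕ}
    {B : Finset G} (hB : d * #B < Fintype.card G) (x : G) :
    ∃ y, ∀ j < d, y + j • x ∉ B := by
  classical
  have spoiled_card_le (b : G) : #{y | ∃ j < d, y + j • x = b} ≤ d := by
    calc #{y | ∃ j < d, y + j • x = b} ≤ #((range d).image fun j => b - j • x) :=
          card_le_card fun y hy => by
            obtain ⟨j, hj, rfl⟩ := (mem_filter.1 hy).2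
            exact mem_image.2 ⟨j, mem_range.2 hj, add_sub_cancel_right _ _⟩
      _ ≤ d := card_image_le.trans_eq (card_range d)
  obtain ⟨y, hy⟩ := exists_forall_mem_not_of_card_filter_le (fun b _ => spoiled_card_le b) hB
  exact ⟨y, fun j hj hmem => hy _ hmem ⟨j, hj, rfl⟩⟩

lemma sum_update_const_mem {M ι : Type*} [AddCommMonoid M] [Fintype ι] [DecidableEq ι]
    {A : Set M} {x y : M} (hx : ∀ j, 0 < j → j < Fintype.card ι → j • x ∈ A)
    (hy : ∀ j < Fintype.card ι, y + j • x ∈ A) (i₀ : ι) {I : Finset ι} (hI : I.Nonempty) :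
    ∑ i ∈ I, Function.update (fun _ => x) i₀ y i ∈ A := by
  by_cases hmem : i₀ ∈ I
  · rw [sum_update_of_mem hmem, sum_const]
    exact hy _ (card_lt_univ_of_notMem (x := i₀) (by simp))
  · rw [sum_update_of_notMem hmem, sum_const]
    exact hx _ hI.card_pos (card_lt_univ_of_notMem hmem)

lemma card_range_filter_modEq {g d : ℕ} (hg : 0 < g) (hgd : g ∣ d) (v : ℕ) :
    #{j ∈ range d | j ≡ v [MOD g]} = d / g := by
  rw [← Nat.count_eq_card_filter_range, Nat.count_modEq_card _ hg, Nat.mod_eq_zero_of_dvd hgd,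
    if_neg (Nat.not_lt_zero _), add_zero]

lemma gcd_mul_prime_dvd_pow_of_not_pow_dvd {p k b : ℕ} (hp : p.Prime) (hb : ¬ p ^ k ∣ b)
    (l : ℕ) : (b * p).gcd (p ^ l) ∣ p ^ k := by
  obtain ⟨m, -, hm⟩ := (Nat.dvd_prime_pow hp).1 (Nat.gcd_dvd_right (b * p) (p ^ l))
  have hdvd : p ^ m ∣ b * p := hm ▸ Nat.gcd_dvd_left _ _
  rw [hm]
  refine pow_dvd_pow p (not_lt.1 fun hkm => hb ?_)
  exact Nat.dvd_of_mul_dvd_mul_right hp.pos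
    (pow_succ p k ▸ (pow_dvd_pow p hkm).trans hdvd)

lemma dvd_val_mul {N d : ℕ} (hdN : d ∣ N) {b : ZMod N} (hb : d ∣ b.val) (u : ZMod N) :
    d ∣ (b * u).val := by
  rw [ZMod.val_mul, Nat.dvd_mod_iff hdN]
  exact hb.mul_right _

section AffineCount

variable {N : ℕ} [NeZero N]

lemma card_filter_add_natCast_mul_eq_le (c : ℕ) (a b : ZMod N) :
    #{t : ZMod N | b + c * t = a} ≤ c.gcd N := by
  obtain hempty | ⟨t₀, ht₀⟩ := ({t : ZMod N | b + c * t = a} : Finset _).eq_empty_or_nonempty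
  · simp [hempty]
  calc #{t : ZMod N | b + c * t = a} ≤ #{t : ZMod N | c.gcd N • t = 0} := by
        refine card_le_card_of_injOn (· - t₀) (fun t ht => ?_) sub_left_injective.injOn
        have heq : b + c * t = b + c * t₀ := by
          rw [(mem_filter.1 ht).2, (mem_filter.1 ht₀).2]
        have hker : (c : ZMod N) * (t - t₀) = 0 := by
          rw [mul_sub, sub_eq_zero, add_left_cancel heq]
        have hgcd : c.gcd N • (t - t₀) = 0 :=
          gcd_nsmul_eq_zero.2 ⟨by rwa [nsmul_eq_mul], by simp⟩
        simpa using hgcd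
    _ ≤ c.gcd N := IsAddCyclic.card_nsmul_eq_zero_le (Nat.gcd_pos_of_pos_right _ (NeZero.pos N))

lemma val_add_natCast_mul_modEq (c : ℕ) (b t : ZMod N) :
    (b + c * t).val ≡ b.val [MOD c.gcd N] := by
  have hval : (b + c * t).val ≡ b.val + c * t.val [MOD N] := by
    simp [← ZMod.natCast_eq_natCast_iff]
  have hzero : c * t.val ≡ 0 [MOD c.gcd N] :=
    ((Nat.gcd_dvd_left c N).mul_right _).modEq_zero_nat
  exact (hval.of_dvd (Nat.gcd_dvd_right c N)).trans (hzero.add_left b.val)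

lemma card_filter_val_add_natCast_mul_lt_le {c d : ℕ} (hcd : c.gcd N ∣ d) (b : ZMod N) :
    #{t : ZMod N | (b + c * t).val < d} ≤ d := by
  have hg : 0 < c.gcd N := Nat.gcd_pos_of_pos_right _ (NeZero.pos N)
  calc #{t : ZMod N | (b + c * t).val < d}
      ≤ c.gcd N * #{j ∈ range d | j ≡ b.val [MOD c.gcd N]} := by
        refine card_le_mul_card_image_of_maps_to (f := fun t => (b + c * t).val)
          (fun t ht => ?_) _ fun j _ => ?_
        · simpa [val_add_natCast_mul_modEq] using ht
        · refine (card_le_card fun t ht => ?_).trans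
            (card_filter_add_natCast_mul_eq_le c (j : ZMod N) b)
          simp [← (mem_filter.1 ht).2]
    _ = d := by rw [card_range_filter_modEq hg hcd, Nat.mul_div_cancel' hcd]

end AffineCount

lemma isUnit_one_add_natCast_mul_zmod_pow {p l : ℕ} (t : ZMod (p ^ l)) : IsUnit (1 + p * t) := by
  have hnil : IsNilpotent (p : ZMod (p ^ l)) := ⟨l, by rw [← Nat.cast_pow, ZMod.natCast_self]⟩
  exact ((Commute.all _ _).isNilpotent_mul_right hnil).isUnit_one_add

section PrimePower

variable {p l k : ℕ} [hp : Fact p.Prime]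

lemma card_filter_val_mul_one_add_le (hkl : k ≤ l) (b : ZMod (p ^ l)) :
    #{t : ZMod (p ^ l) | (b * (1 + p * t)).val ∈ Set.Ioo 0 (p ^ k)} ≤ p ^ k := by
  by_cases hdvd : p ^ k ∣ b.val
  · rw [filter_false_of_mem]
    · simp
    · rintro t - ⟨hpos, hlt⟩
      exact Nat.not_dvd_of_pos_of_lt hpos hlt (dvd_val_mul (pow_dvd_pow p hkl) hdvd _)
  · have haffine (t : ZMod (p ^ l)) : b * (1 + p * t) = b + (b.val * p : ℕ) * t := by
      rw [Nat.cast_mul, ZMod.natCast_zmod_val]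
      ring
    simp only [haffine]
    exact (card_le_card (monotone_filter_right _ fun _ _ ht => ht.2)).trans
      (card_filter_val_add_natCast_mul_lt_le
        (gcd_mul_prime_dvd_pow_of_not_pow_dvd hp.out hdvd l) b)

lemma exists_forall_nsmul_notMem_zmod_prime_pow (hkl : k ≤ l) {B : Finset (ZMod (p ^ l))}
    (hB : p ^ k * #B < p ^ l) :
    ∃ x : ZMod (p ^ l), ∀ j, 0 < j → j < p ^ k → j • x ∉ B := by
  obtain ⟨t, ht⟩ := exists_forall_mem_not_of_card_filter_le
    (fun b (_ : b ∈ B) => card_filter_val_mul_one_add_le hkl b) (by rwa [ZMod.card])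
  obtain ⟨u, hu⟩ := isUnit_one_add_natCast_mul_zmod_pow t
  refine ⟨↑u⁻¹, fun j hpos hlt hmem => ht _ hmem ?_⟩
  have hjl : j < p ^ l := hlt.trans_le (Nat.pow_le_pow_right hp.out.pos hkl)
  rw [← hu, nsmul_eq_mul, Units.inv_mul_cancel_right, ZMod.val_cast_of_lt hjl]
  exact ⟨hpos, hlt⟩

end PrimePower

lemma mul_card_compl_lt_card {α : Type*} [Fintype α] [DecidableEq α] {d : ℕ} {A : Finset α}
    (hA : (d - 1) * Fintype.card α < d * #A) : d * #Aᶜ < Fintype.card α := by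
  obtain _ | e := d
  · simp at hA
  · have hcard := card_add_card_compl A
    rw [Nat.add_sub_cancel] at hA
    nlinarith

theorem stmt_3 (p l N d : ℕ) (hp : p.Prime) (hl : 1 ≤ l) (hN : N = p ^ l)
    (hd : 2 ≤ d) (hdN : d ∣ N) (A : Finset (ZMod N))
    (hA : IsCubeFree N d A) :
    d * A.card ≤ (d - 1) * N := by
  subst hN
  have : Fact p.Prime := ⟨hp⟩
  obtain ⟨k, hkl, rfl⟩ := (Nat.dvd_prime_pow hp).1 hdN
  by_contra! hlarge
  have hcompl : p ^ k * #Aᶜ < Fintype.card (ZMod (p ^ l)) :=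
    mul_card_compl_lt_card (by rwa [ZMod.card])
  obtain ⟨x, hx⟩ := exists_forall_nsmul_notMem_zmod_prime_pow hkl (by rwa [ZMod.card] at hcompl)
  obtain ⟨y, hy⟩ := exists_forall_lt_add_nsmul_notMem hcompl x
  simp only [notMem_compl] at hx hy
  let i₀ : Fin (p ^ k) := ⟨0, pow_pos hp.pos k⟩
  refine hA ⟨Function.update (fun _ => x) i₀ y, fun I hI =>
    mem_coe.1 (sum_update_const_mem ?_ ?_ i₀ hI)⟩
  · simpa only [Fintype.card_fin, mem_coe] using hx
  · simpa only [Fintype.card_fin, mem_coe] using hy
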